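/- Let P ∈ 𝕊ⁿ and 1 ≤ r ≤ n−1. If Σ_{i=1}^r λ_i(P) − r·λ_{r+1}(P) ≥ 1, then rank( Π_{S_n}[P] ) ≤ r. -/

import Mathlib

open scoped BigOperators RealInnerProductSpace
open Matrix

noncomputable section

abbrev Mat (n : ℕ) := Matrix (Fin n) (Fin n) ℝ
abbrev Vec (m : ℕ) := EuclideanSpace ℝ (Fin m)

/-- Trace inner product `⟨A,B⟩ = Tr(AB)`. -/
def mip {n : ℕ} (A B : Mat n) : ℝ := (A * B).trace

/-- Frobenius norm. -/
def frob {n : ℕ} (A : Mat n) : ℝ := Real.sqrt (∑ i, ∑ j, (A i j) ^ 2)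

/-- The set of symmetric `n × n` real matrices (the space `𝕊ⁿ`). -/
def SymM (n : ℕ) : Set (Mat n) := {X | X.IsSymm}

/-- The spectrahedron `S_n`. -/
def Spectra (n : ℕ) : Set (Mat n) := {X | X.trace = 1 ∧ X.PosSemidef}

/-- `lam A k` : the `k`-th largest eigenvalue of a symmetric matrix `A` (1-indexed,
so `lam A 1 = λ₁(A)` is the largest and `lam A n = λₙ(A)` is the smallest);
junk value otherwise. -/
def lam {n : ℕ} (A : Mat n) (k : ℕ) : ℝ :=
  if h : k - 1 < n then
    if hA : A.IsHermitian then
      hA.eigenvalues (Tuple.sort hA.eigenvalues (Fin.rev ⟨k - 1, h⟩))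
    else 0
  else 0

/-- Multiplicity of the smallest eigenvalue of `A`. -/
def multMin {n : ℕ} (A : Mat n) : ℕ :=
  letI := Classical.decPred fun k : ℕ => lam A k = lam A n
  ((Finset.Icc 1 n).filter fun k => lam A k = lam A n).card

/-- Subdifferential of `g : 𝕊ⁿ → ℝ` at `X`. -/
def subdiff {n : ℕ} (g : Mat n → ℝ) (X : Mat n) : Set (Mat n) :=
  {G | G.IsSymm ∧ ∀ Y ∈ SymM n, g Y ≥ g X + mip G (Y - X)}

/-- Euclidean (Frobenius-norm) projection onto `C ⊆ 𝕊ⁿ`. -/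
def mproj {n : ℕ} (C : Set (Mat n)) (X : Mat n) : Mat n :=
  Classical.epsilon fun P => P ∈ C ∧ ∀ Q ∈ C, frob (X - P) ≤ frob (X - Q)

/-- Euclidean projection onto `C ⊆ ℝᵐ`. -/
def vproj {m : ℕ} (C : Set (Vec m)) (x : Vec m) : Vec m :=
  Classical.epsilon fun p => p ∈ C ∧ ∀ q ∈ C, ‖x - p‖ ≤ ‖x - q‖

/-- Norm on the product space `𝕊ⁿ × ℝᵐ`. -/
def pnorm {n m : ℕ} (X : Mat n) (y : Vec m) : ℝ := Real.sqrt (frob X ^ 2 + ‖y‖ ^ 2)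

/-!
If `X` is positive semidefinite of trace one and `P = θ • 1 + X - N` with `N` positive semidefinite
and `N * X = 0`, then `⟪P - X, X - Q⟫ = tr (N * Q) ≥ 0` for every `Q` in the spectrahedron, so `X`
is the projection of `P`. The positive and negative parts of `P - θ • 1` are such `X` and `N`,
provided that `∑ i, (λ i - θ)⁺ = 1`. At `θ = λ (r + 1)` this sum is at least
`∑ i ≤ r, λ i - r * λ (r + 1) ≥ 1`, and it decreases continuously to `0` as `θ` grows, so the right
`θ` is at least `λ (r + 1)`. Hence at most `r` eigenvalues of `P` exceed `θ`, and these are the ones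
that contribute to the rank of `(P - θ • 1)⁺`.
-/

section HermitianMatrices

open scoped ComplexOrder MatrixOrder

variable {ι 𝕜 : Type*} [Fintype ι] [RCLike 𝕜] {A B : Matrix ι ι 𝕜}

lemma trace_mul_nonneg_of_posSemidef (hA : A.PosSemidef) (hB : B.PosSemidef) :
    0 ≤ (A * B).trace := by
  classical
  obtain ⟨C, rfl⟩ := CStarAlgebra.nonneg_iff_eq_star_mul_self.1 hB.nonneg
  rw [star_eq_conjTranspose, ← Matrix.mul_assoc, trace_mul_comm, ← Matrix.mul_assoc]
  exact (hA.mul_mul_conjTranspose_same C).trace_nonneg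

variable [DecidableEq ι]

lemma trace_cfc_eq_sum (hA : A.IsHermitian) (f : ℝ → ℝ) :
    (cfc f A).trace = ∑ i, (f (hA.eigenvalues i) : 𝕜) := by
  rw [hA.cfc_eq, IsHermitian.cfc, Unitary.conjStarAlgAut_apply, trace_mul_cycle,
    Unitary.coe_star_mul_self, Matrix.one_mul, trace_diagonal]
  rfl

lemma rank_cfc_eq_card (hA : A.IsHermitian) (f : ℝ → ℝ) :
    (cfc f A).rank = Finset.card {i | f (hA.eigenvalues i) ≠ 0} := by
  rw [hA.cfc_eq, IsHermitian.cfc, Unitary.conjStarAlgAut_apply, ← Unitary.coe_star,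
    rank_mul_eq_left_of_isUnit_det _ _ (UnitaryGroup.det_isUnit _),
    rank_mul_eq_right_of_isUnit_det _ _ (UnitaryGroup.det_isUnit _), rank_diagonal,
    Fintype.card_subtype]
  simp only [Function.comp_apply, ne_eq, RCLike.ofReal_eq_zero]

lemma posPart_sub_smul_one_eq_cfc (hA : A.IsHermitian) (θ : ℝ) :
    (A - θ • 1)⁺ = cfc (fun t => (t - θ)⁺) A := by
  have hA' : IsSelfAdjoint A := hA
  have hshift : A - θ • 1 = cfc (fun t => t - θ) A := by
    rw [cfc_sub (fun t => t) (fun _ => θ) A, cfc_id' ℝ A, cfc_const θ A,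
      Algebra.algebraMap_eq_smul_one]
  rw [hshift, CFC.posPart_def, cfcₙ_eq_cfc, ← cfc_comp' _ _ A]

lemma trace_posPart_sub_smul_one (hA : A.IsHermitian) (θ : ℝ) :
    (A - θ • 1)⁺.trace = ∑ i, (((hA.eigenvalues i - θ)⁺ : ℝ) : 𝕜) := by
  rw [posPart_sub_smul_one_eq_cfc hA, trace_cfc_eq_sum hA]

lemma rank_posPart_sub_smul_one (hA : A.IsHermitian) (θ : ℝ) :
    (A - θ • 1)⁺.rank = Finset.card {i | θ < hA.eigenvalues i} := by
  rw [posPart_sub_smul_one_eq_cfc hA]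
  simpa only [ne_eq, posPart_eq_zero, sub_nonpos, not_le] using
    rank_cfc_eq_card hA fun t => (t - θ)⁺

end HermitianMatrices

section FrobeniusProjection

open scoped Matrix.Norms.Frobenius

variable {n : ℕ}

lemma frob_eq_norm (A : Mat n) : frob A = ‖A‖ := by
  simp [frob, frobenius_norm_def, Real.sqrt_eq_rpow]

lemma frob_add_sq (A : Mat n) {B : Mat n} (hB : B.IsSymm) :
    frob (A + B) ^ 2 = frob A ^ 2 + 2 * mip A B + frob B ^ 2 := by
  have frob_sq (M : Mat n) : frob M ^ 2 = ∑ i, ∑ j, M i j ^ 2 :=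
    Real.sq_sqrt (Finset.sum_nonneg fun i _ => Finset.sum_nonneg fun j _ => sq_nonneg _)
  have mip_eq_sum : mip A B = ∑ i, ∑ j, A i j * B i j := by
    simp only [mip, trace, diag_apply, mul_apply, hB.apply]
  simp only [frob_sq, mip_eq_sum, Finset.mul_sum, ← Finset.sum_add_distrib, Matrix.add_apply]
  exact Finset.sum_congr rfl fun i _ => Finset.sum_congr rfl fun j _ => by ring

lemma mproj_eq_of_forall_mip_nonneg {C : Set (Mat n)} (hC : C ⊆ SymM n) {P X : Mat n}
    (hX : X ∈ C) (hvar : ∀ Q ∈ C, 0 ≤ mip (P - X) (X - Q)) : mproj C P = X := by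
  have pythagoras (Q : Mat n) (hQ : Q ∈ C) :
      frob (P - X) ^ 2 + frob (X - Q) ^ 2 ≤ frob (P - Q) ^ 2 := by
    have expand := frob_add_sq (P - X) ((hC hX).sub (hC hQ))
    rw [sub_add_sub_cancel] at expand
    linarith [hvar Q hQ]
  have hmin (Q : Mat n) (hQ : Q ∈ C) : frob (P - X) ≤ frob (P - Q) :=
    le_of_sq_le_sq ((le_add_of_nonneg_right (sq_nonneg _)).trans (pythagoras Q hQ))
      (Real.sqrt_nonneg _)
  have hexists : ∃ Y, Y ∈ C ∧ ∀ Q ∈ C, frob (P - Y) ≤ frob (P - Q) := ⟨X, hX, hmin⟩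
  obtain ⟨hY, hYmin⟩ : mproj C P ∈ C ∧ ∀ Q ∈ C, frob (P - mproj C P) ≤ frob (P - Q) :=
    Classical.epsilon_spec hexists
  have hsq : frob (P - mproj C P) ^ 2 ≤ frob (P - X) ^ 2 :=
    pow_le_pow_left₀ (Real.sqrt_nonneg _) (hYmin X hX) 2
  have hdist : frob (X - mproj C P) = 0 :=
    pow_eq_zero_iff two_ne_zero |>.1 <|
      le_antisymm (by linarith [pythagoras _ hY]) (sq_nonneg _)
  rw [frob_eq_norm, norm_eq_zero, sub_eq_zero] at hdist
  exact hdist.symm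

end FrobeniusProjection

section SpectrahedronProjection

open scoped MatrixOrder

variable {n : ℕ} {P : Mat n}

lemma spectra_subset_symM : Spectra n ⊆ SymM n :=
  fun _ hX => isHermitian_iff_isSymm.1 hX.2.isHermitian

lemma mproj_spectra_eq_of_complementarity {X N : Mat n} {θ : ℝ}
    (hX : X ∈ Spectra n) (hN : N.PosSemidef) (hNX : N * X = 0) (hdecomp : X - N = P - θ • 1) :
    mproj (Spectra n) P = X := by
  have hresidual : P - X = θ • 1 - N := by
    rw [sub_eq_sub_iff_add_eq_add] at hdecomp ⊢
    rw [← hdecomp, add_comm]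
  refine mproj_eq_of_forall_mip_nonneg spectra_subset_symM hX fun Q hQ => ?_
  calc
    0 ≤ (N * Q).trace := trace_mul_nonneg_of_posSemidef hN hQ.2
    _ = mip (P - X) (X - Q) := by
      simp [mip, hresidual, Matrix.sub_mul, Matrix.mul_sub, hNX, hX.1, hQ.1]

lemma mproj_spectra_eq_posPart_sub (hP : P.IsHermitian) {θ : ℝ}
    (hθ : (P - θ • 1)⁺.trace = 1) : mproj (Spectra n) P = (P - θ • 1)⁺ := by
  have hP' : IsSelfAdjoint (P - θ • 1) := hP.sub (isHermitian_one.smul (IsSelfAdjoint.all θ))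
  exact mproj_spectra_eq_of_complementarity
    ⟨hθ, (CFC.posPart_nonneg _).posSemidef⟩ (CFC.negPart_nonneg _).posSemidef
    (CFC.negPart_mul_posPart _) (CFC.posPart_sub_negPart _ hP')

end SpectrahedronProjection

lemma exists_sum_posPart_sub_eq {ι : Type*} [Fintype ι] (l : ι → ℝ) {a c : ℝ} (hc : 0 ≤ c)
    (hac : c ≤ ∑ i, (l i - a)⁺) : ∃ θ ≥ a, ∑ i, (l i - θ)⁺ = c := by
  obtain ⟨b, hb⟩ := (Set.finite_range l).bddAbove
  have hl (i : ι) : l i ≤ max a b := (hb ⟨i, rfl⟩).trans (le_max_right a b)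
  have hzero : ∑ i, (l i - max a b)⁺ = 0 :=
    Finset.sum_eq_zero fun i _ => posPart_eq_zero.2 (sub_nonpos.2 (hl i))
  have hcont : Continuous fun θ => ∑ i, (l i - θ)⁺ := by
    simp only [posPart_def]
    fun_prop
  obtain ⟨θ, ⟨haθ, -⟩, hθ⟩ := intermediate_value_Icc' (le_max_left a b) hcont.continuousOn
    ⟨hzero.trans_le hc, hac⟩
  exact ⟨θ, haθ, hθ⟩

section SortedEigenvalues

variable {n : ℕ} {A : Mat n}

lemma exists_perm_forall_eigenvalues_eq_lam (hA : A.IsHermitian) :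
    ∃ e : Equiv.Perm (Fin n), ∀ k : Fin n, hA.eigenvalues (e k) = lam A (k + 1) :=
  ⟨Fin.revPerm.trans (Tuple.sort hA.eigenvalues), fun k => by
    simp only [lam, Nat.add_sub_cancel, k.isLt, hA, dif_pos]
    rfl⟩

lemma lam_antitone (hA : A.IsHermitian) : Antitone fun k : Fin n => lam A (k + 1) := by
  intro i j hij
  simp only [lam, Nat.add_sub_cancel, Fin.is_lt, hA, dif_pos]
  exact Tuple.monotone_sort hA.eigenvalues (Fin.rev_le_rev.2 hij)

lemma card_lam_lt_eigenvalues_le (hA : A.IsHermitian) (k : Fin n) :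
    Finset.card {i | lam A (k + 1) < hA.eigenvalues i} ≤ k := by
  obtain ⟨e, he⟩ := exists_perm_forall_eigenvalues_eq_lam hA
  calc
    Finset.card {i | lam A (k + 1) < hA.eigenvalues i}
      ≤ ((Finset.Iio k).map e.toEmbedding).card := by
        refine Finset.card_le_card fun i hi => ?_
        obtain ⟨j, rfl⟩ := e.surjective i
        rw [Finset.mem_filter_univ, he] at hi
        simpa using (lam_antitone hA).reflect_lt hi
    _ = k := by rw [Finset.card_map, Fin.card_Iio]

lemma sum_lam_sub_le_sum_posPart (hA : A.IsHermitian) {r : ℕ} (hr : r ≤ n) (a : ℝ) :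
    ∑ i ∈ Finset.Icc 1 r, lam A i - r * a ≤ ∑ i, (hA.eigenvalues i - a)⁺ := by
  obtain ⟨e, he⟩ := exists_perm_forall_eigenvalues_eq_lam hA
  calc
    ∑ i ∈ Finset.Icc 1 r, lam A i - r * a
      = ∑ k ∈ Finset.range r, (lam A (k + 1) - a) := by
        rw [Finset.range_eq_Ico, Finset.sum_Ico_add' (fun i => lam A i - a) 0 r 1,
          Finset.sum_sub_distrib]
        simp [Finset.Ico_add_one_right_eq_Icc]
    _ ≤ ∑ k ∈ Finset.range r, (lam A (k + 1) - a)⁺ :=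
        Finset.sum_le_sum fun k _ => le_posPart _
    _ ≤ ∑ k ∈ Finset.range n, (lam A (k + 1) - a)⁺ :=
        Finset.sum_le_sum_of_subset_of_nonneg (Finset.range_subset_range.2 hr)
          fun k _ _ => posPart_nonneg _
    _ = ∑ i, (hA.eigenvalues i - a)⁺ := by
        simp only [Finset.sum_range, ← he, Equiv.sum_comp e fun i => (hA.eigenvalues i - a)⁺]

end SortedEigenvalues

theorem stmt_18 {n : ℕ} (hn : 2 ≤ n)
    (P : Mat n) (hP : P.IsSymm)
    (r : ℕ) (hr1 : 1 ≤ r) (hr2 : r ≤ n - 1)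
    (hcond : (∑ i ∈ Finset.Icc 1 r, lam P i) - (r : ℝ) * lam P (r + 1) ≥ 1) :
    (mproj (Spectra n) P).rank ≤ r := by
  have hH : P.IsHermitian := isHermitian_iff_isSymm.2 hP
  have hrn : r < n := by omega
  obtain ⟨θ, hle, hθ⟩ := exists_sum_posPart_sub_eq hH.eigenvalues zero_le_one
    (hcond.trans (sum_lam_sub_le_sum_posPart hH hrn.le (lam P (r + 1))))
  have htrace : (P - θ • 1)⁺.trace = 1 := (trace_posPart_sub_smul_one hH θ).trans hθ
  calc
    (mproj (Spectra n) P).rank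
      = (P - θ • 1)⁺.rank := by rw [mproj_spectra_eq_posPart_sub hH htrace]
    _ = Finset.card {i | θ < hH.eigenvalues i} := rank_posPart_sub_smul_one hH θ
    _ ≤ Finset.card {i | lam P (r + 1) < hH.eigenvalues i} :=
        Finset.card_le_card (Finset.monotone_filter_right _ fun _ _ => hle.trans_lt)
    _ ≤ r := card_lam_lt_eigenvalues_le hH ⟨r, hrn⟩
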